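/- Let G be a connected undirected graph on n ≥ 2 vertices with doubled-edge oriented incidence matrix B ∈ ℝ^{n×ℓ}, let r ≥ 1, γ > 0, t₀ ∈ ℝ, and let φ : ℝ → ℝ^{nr} be a differentiable stacked reference signal for which there exist finite constants φ̄ and dφ̄ with ‖(Bᵀ⊗I_r)φ(t)‖_∞ ≤ φ̄ and ‖(Bᵀ⊗I_r)φ'(t)‖_∞ ≤ dφ̄ for all t ≥ t₀. Suppose z : ℝ → ℝ^{nr} and κ₁,…,κ_{rℓ} : ℝ → ℝ are differentiable on [t₀,∞) and, writing x(t) = z(t) + φ(t), y(t) = (Bᵀ⊗I_r)x(t), and K(t) = diag(κ₁(t),…,κ_{rℓ}(t)), satisfy for all t ≥ t₀: z'(t) = −γ z(t) − (B⊗I_r) K(t) sgn(y(t)), κⱼ'(t) = |yⱼ(t)| for each j, and κⱼ(t₀) ≥ 1. Then for every initial condition z(t₀), the average-consensus error x̃(t) = x(t) − ((1/n)1_n1_nᵀ ⊗ I_r) φ(t) converges to 0 as t → ∞. -/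

import Mathlib

open Matrix Kronecker Filter Topology

/-- Doubled-edge oriented incidence matrix of a simple graph: each undirected edge is regarded
as two oppositely oriented directed edges (darts); entry is `1` if the dart enters the vertex,
`-1` if it leaves it, and `0` otherwise. -/
noncomputable def dartIncidence {V : Type*} [Fintype V] [DecidableEq V] (G : SimpleGraph V)
    [DecidableRel G.Adj] : Matrix V G.Dart ℝ :=
  Matrix.of fun v d => if d.snd = v then 1 else if d.fst = v then -1 else 0

lemma conv_of_mono (f : ℝ → ℝ) (t₀ b : ℝ) (hm : MonotoneOn f (Set.Ici t₀))
    (hb : ∀ t ≥ t₀, f t ≤ b) : ∃ l, Tendsto f atTop (𝓝 l) := by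
  have hmono : Monotone (fun t => f (max t t₀)) := fun a c hac =>
    hm (Set.mem_Ici.2 (le_max_right _ _)) (Set.mem_Ici.2 (le_max_right _ _)) (max_le_max_right _ hac)
  have hbdd : BddAbove (Set.range fun t => f (max t t₀)) := by
    refine ⟨b, ?_⟩
    rintro _ ⟨t, rfl⟩
    exact hb _ (le_max_right _ _)
  refine ⟨_, (tendsto_atTop_ciSup hmono hbdd).congr' ?_⟩
  filter_upwards [eventually_ge_atTop t₀] with t ht
  rw [max_eq_left ht]

lemma mono_of_deriv (f f' : ℝ → ℝ) (t₀ : ℝ) (hf : ∀ t ≥ t₀, HasDerivAt f (f' t) t)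
    (h : ∀ t ≥ t₀, 0 ≤ f' t) : MonotoneOn f (Set.Ici t₀) := by
  apply monotoneOn_of_hasDerivWithinAt_nonneg (f' := f') (convex_Ici t₀)
  · intro t ht
    exact (hf t ht).continuousAt.continuousWithinAt
  · intro t ht
    rw [interior_Ici] at ht
    exact (hf t (le_of_lt ht)).hasDerivWithinAt
  · intro t ht
    rw [interior_Ici] at ht
    exact h t (le_of_lt ht)

lemma core {ι : Type*} [Fintype ι] (t₀ γ C : ℝ) (hγ : 0 < γ) (κ a : ι → ℝ → ℝ) (U U' : ℝ → ℝ)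
    (ha : ∀ j t, 0 ≤ a j t)
    (hκ : ∀ j, ∀ t ≥ t₀, HasDerivAt (κ j) (a j t) t)
    (hU0 : ∀ t, 0 ≤ U t)
    (hU : ∀ t ≥ t₀, HasDerivAt U (U' t) t)
    (hle : ∀ t ≥ t₀, U' t ≤ -2 * γ * U t + ∑ j, (C - κ j t) * a j t) :
    Tendsto U atTop (𝓝 0) := by
  set F : ℝ → ℝ := fun t => -(U t + ∑ j, (κ j t - C) ^ 2 / 2) with hF
  have hFd : ∀ t ≥ t₀, HasDerivAt F (-(U' t + ∑ j, (κ j t - C) * a j t)) t := by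
    intro t ht
    refine ((hU t ht).add (HasDerivAt.fun_sum fun j _ => ?_)).neg
    have := (((hκ j t ht).sub_const C).pow 2).div_const 2
    refine this.congr_deriv ?_
    simp
    ring
  have hF2 : ∀ t ≥ t₀, 2 * γ * U t ≤ -(U' t + ∑ j, (κ j t - C) * a j t) := by
    intro t ht
    have h1 := hle t ht
    have : ∑ j, (C - κ j t) * a j t = - ∑ j, (κ j t - C) * a j t := by
      rw [← Finset.sum_neg_distrib]
      exact Finset.sum_congr rfl fun j _ => by ring
    linarith
  have hFm : MonotoneOn F (Set.Ici t₀) := mono_of_deriv F _ t₀ hFd fun t ht =>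
    le_trans (by have := hU0 t; positivity) (hF2 t ht)
  have hF0 : ∀ t ≥ t₀, F t ≤ 0 := by
    intro t _
    have : 0 ≤ ∑ j, (κ j t - C) ^ 2 / 2 := Finset.sum_nonneg fun j _ => by positivity
    have := hU0 t
    simp only [hF]; linarith
  obtain ⟨l, hl⟩ := conv_of_mono F t₀ 0 hFm hF0
  have hκc : ∀ j, ∃ l, Tendsto (κ j) atTop (𝓝 l) := by
    intro j
    refine conv_of_mono (κ j) t₀ (C + 1 + 2 * (-F t₀)) (mono_of_deriv _ _ t₀ (hκ j) fun t _ => ha j t) ?_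
    intro t ht
    have h1 : F t₀ ≤ F t := hFm (Set.mem_Ici.2 le_rfl) ht ht
    have h2 : (κ j t - C) ^ 2 / 2 ≤ ∑ j, (κ j t - C) ^ 2 / 2 :=
      Finset.single_le_sum (f := fun j => (κ j t - C) ^ 2 / 2)
        (fun j _ => by positivity) (Finset.mem_univ j)
    have h3 := hU0 t
    have h4 : F t = -(U t + ∑ j, (κ j t - C) ^ 2 / 2) := rfl
    nlinarith [sq_nonneg (κ j t - C - 1)]
  choose k hk using hκc
  have hUl : Tendsto U atTop (𝓝 (-l - ∑ j, (k j - C) ^ 2 / 2)) := by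
    have : Tendsto (fun t => -F t - ∑ j, (κ j t - C) ^ 2 / 2) atTop
        (𝓝 (-l - ∑ j, (k j - C) ^ 2 / 2)) :=
      hl.neg.sub (tendsto_finsetSum _ fun j _ => (((hk j).sub_const C).pow 2).div_const 2)
    refine this.congr fun t => ?_
    simp only [hF]; ring
  set L := -l - ∑ j, (k j - C) ^ 2 / 2
  have hL0 : 0 ≤ L := ge_of_tendsto' hUl hU0
  rcases hL0.eq_or_lt with h | h
  · rwa [← h] at hUl
  exfalso
  obtain ⟨T, hT⟩ := eventually_atTop.1 (hUl.eventually (lt_mem_nhds (half_lt_self h)))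
  set T1 := max T t₀
  have hm2 : MonotoneOn (fun t => F t - γ * L * t) (Set.Ici T1) := by
    refine mono_of_deriv _ (fun t => -(U' t + ∑ j, (κ j t - C) * a j t) - γ * L) T1 ?_ ?_
    · intro t ht
      have := (hFd t (le_trans (le_max_right _ _) ht)).sub ((hasDerivAt_id t).const_mul (γ * L))
      exact this.congr_deriv (by simp)
    · intro t ht
      have h1 := hF2 t (le_trans (le_max_right _ _) ht)
      have h2 := hT t (le_trans (le_max_left _ _) ht)
      have : γ * (L / 2) ≤ γ * U t := mul_le_mul_of_nonneg_left h2.le hγ.le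
      linarith
  have hgL : 0 < γ * L := mul_pos hγ h
  set s := T1 + (-F T1 + 1) / (γ * L)
  have hT1 : F T1 ≤ 0 := hF0 _ (le_max_right _ _)
  have hs : T1 ≤ s := by
    have : 0 ≤ (-F T1 + 1) / (γ * L) := div_nonneg (by linarith) hgL.le
    simp only [s]; linarith
  have h5 := hm2 (Set.mem_Ici.2 le_rfl) hs hs
  have h6 := hF0 s (le_trans (le_max_right _ _) hs)
  have h7 : γ * L * s = γ * L * T1 + (-F T1 + 1) := by
    simp only [s]; field_simp
  dsimp only at h5
  linarith

lemma exp_decay (s : ℝ → ℝ) (γ t₀ : ℝ) (hγ : 0 < γ)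
    (hs : ∀ t ≥ t₀, HasDerivAt s (-γ * s t) t) : Tendsto s atTop (𝓝 0) := by
  have hg : ∀ t ≥ t₀, HasDerivAt (fun t => s t * Real.exp (γ * t)) 0 t := by
    intro t ht
    have h1 : HasDerivAt (fun t => Real.exp (γ * t)) (Real.exp (γ * t) * γ) t := by
      simpa using ((hasDerivAt_id t).const_mul γ).exp
    refine ((hs t ht).mul h1).congr_deriv ?_
    ring
  have h1 := mono_of_deriv _ (fun _ => 0) t₀ hg (by simp)
  have h2 := mono_of_deriv _ (fun _ => 0) t₀ (fun t ht => by simpa using (hg t ht).neg) (by simp)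
  have hc : ∀ t ≥ t₀, s t = s t₀ * Real.exp (γ * t₀) * Real.exp (-(γ * t)) := by
    intro t ht
    have a1 := h1 (Set.mem_Ici.2 le_rfl) ht ht
    have a2 := h2 (Set.mem_Ici.2 le_rfl) ht ht
    simp only [Pi.neg_apply] at a1 a2
    have : s t * Real.exp (γ * t) = s t₀ * Real.exp (γ * t₀) := by linarith
    rw [← this, mul_assoc, ← Real.exp_add]; simp
  have h3 : Tendsto (fun t => s t₀ * Real.exp (γ * t₀) * Real.exp (-(γ * t))) atTop (𝓝 0) := by
    have : Tendsto (fun t => Real.exp (-(γ * t))) atTop (𝓝 0) :=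
      Real.tendsto_exp_neg_atTop_nhds_zero.comp (tendsto_id.const_mul_atTop hγ)
    simpa using this.const_mul (s t₀ * Real.exp (γ * t₀))
  refine h3.congr' ?_
  filter_upwards [eventually_ge_atTop t₀] with t ht
  exact (hc t ht).symm

section graph
variable {V : Type*} [Fintype V] [DecidableEq V] (G : SimpleGraph V) [DecidableRel G.Adj]

lemma walk_bound (f : V → ℝ) {v w : V} (p : G.Walk v w) :
    |f v - f w| ≤ p.length * ∑ d : G.Dart, |f d.snd - f d.fst| := by
  induction p with
  | nil => simp
  | @cons u v w h p ih =>
    have h1 : |f v - f u| ≤ ∑ d : G.Dart, |f d.snd - f d.fst| :=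
      Finset.single_le_sum (f := fun d : G.Dart => |f d.snd - f d.fst|)
        (fun _ _ => abs_nonneg _) (Finset.mem_univ (⟨(u, v), h⟩ : G.Dart))
    have h2 := abs_sub_le (f u) (f v) (f w)
    rw [abs_sub_comm] at h1
    rw [SimpleGraph.Walk.length_cons]
    push_cast
    linarith

lemma conn_bound (hG : G.Connected) (f : V → ℝ) (v w : V) :
    |f v - f w| ≤ Fintype.card V * ∑ d : G.Dart, |f d.snd - f d.fst| := by
  obtain ⟨p, hp⟩ := hG.exists_isPath v w
  refine (walk_bound G f p).trans ?_
  have : (p.length : ℝ) ≤ Fintype.card V := by exact_mod_cast hp.length_lt.le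
  exact mul_le_mul_of_nonneg_right this (Finset.sum_nonneg fun _ _ => abs_nonneg _)

/-- centering -/
noncomputable def cen {r : ℕ} (f : V × Fin r → ℝ) : V × Fin r → ℝ :=
  fun i => f i - (∑ w, f (w, i.2)) / Fintype.card V

lemma cen_bound (hG : G.Connected) {r : ℕ} (f : V × Fin r → ℝ) (i : V × Fin r) :
    |cen f i| ≤ Fintype.card V * ∑ j : G.Dart × Fin r, |f (j.1.snd, j.2) - f (j.1.fst, j.2)| := by
  obtain ⟨v, k⟩ := i
  have : Nonempty V := ⟨v⟩
  have hc : (0 : ℝ) < Fintype.card V := by exact_mod_cast Fintype.card_pos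
  set S := ∑ j : G.Dart × Fin r, |f (j.1.snd, j.2) - f (j.1.fst, j.2)| with hS
  have hS1 : ∑ d : G.Dart, |f (d.snd, k) - f (d.fst, k)| ≤ S := by
    rw [hS, Fintype.sum_prod_type_right]
    exact Finset.single_le_sum
      (f := fun k => ∑ d : G.Dart, |f (d.snd, k) - f (d.fst, k)|)
      (fun _ _ => Finset.sum_nonneg fun _ _ => abs_nonneg _) (Finset.mem_univ k)
  have h1 : cen f (v, k) = (∑ w, (f (v, k) - f (w, k))) / Fintype.card V := by
    simp [cen, Finset.sum_sub_distrib]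
    field_simp
  rw [h1, abs_div, abs_of_pos hc, div_le_iff₀ hc]
  refine (Finset.abs_sum_le_sum_abs _ _).trans ?_
  refine (Finset.sum_le_sum (g := fun _ => Fintype.card V * S) fun w _ => ?_).trans ?_
  · refine (conn_bound G hG (fun v => f (v, k)) v w).trans ?_
    exact mul_le_mul_of_nonneg_left hS1 hc.le
  · simp; linarith

lemma cen_sum {r : ℕ} (f : V × Fin r → ℝ) (k : Fin r) : ∑ v, cen f (v, k) = 0 := by
  rcases isEmpty_or_nonempty V with h | h
  · simp
  have hc : (0 : ℝ) < Fintype.card V := by exact_mod_cast Fintype.card_pos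
  simp [cen, Finset.sum_sub_distrib]
  field_simp
  simp

lemma cen_dot {r : ℕ} (f g : V × Fin r → ℝ) :
    ∑ i, cen f i * cen g i = ∑ i, cen f i * g i := by
  rw [← sub_eq_zero, ← Finset.sum_sub_distrib, Fintype.sum_prod_type_right]
  refine Finset.sum_eq_zero fun k _ => ?_
  have : ∀ v, cen f (v, k) * cen g (v, k) - cen f (v, k) * g (v, k)
      = cen f (v, k) * (-((∑ w, g (w, k)) / Fintype.card V)) := by
    intro v
    simp only [cen]; ring
  rw [Finset.sum_congr rfl fun v _ => this v, ← Finset.sum_mul, cen_sum, zero_mul]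

lemma BT_apply {r : ℕ} (f : V × Fin r → ℝ) (j : G.Dart × Fin r) :
    ((dartIncidence G)ᵀ ⊗ₖ (1 : Matrix (Fin r) (Fin r) ℝ)).mulVec f j
      = f (j.1.snd, j.2) - f (j.1.fst, j.2) := by
  obtain ⟨d, k⟩ := j
  have hne : d.snd ≠ d.fst := d.adj.ne'
  have h : ∀ v, (if d.snd = v then (1 : ℝ) else if d.fst = v then -1 else 0) * f (v, k)
    = (if d.snd = v then f (v, k) else 0) - (if d.fst = v then f (v, k) else 0) := by
    intro v
    by_cases h1 : d.snd = v
    · have : ¬ d.fst = v := fun h2 => hne (h1.trans h2.symm)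
      simp [h1, this]
    · by_cases h2 : d.fst = v <;> simp [h1, h2]
  have h2 := Finset.sum_congr (s₁ := Finset.univ) rfl fun v _ => h v
  rw [Finset.sum_sub_distrib, Finset.sum_ite_eq, Finset.sum_ite_eq] at h2
  simp only [Finset.mem_univ, if_true] at h2
  rw [← h2]
  simp only [Matrix.mulVec, dotProduct, Fintype.sum_prod_type]
  refine Finset.sum_congr rfl fun v _ => ?_
  rw [Finset.sum_eq_single k]
  · simp [dartIncidence]
  · intro b _ hb
    simp [Matrix.one_apply, hb.symm]
  · simp

lemma dot_B {r : ℕ} (f : V × Fin r → ℝ) (w : G.Dart × Fin r → ℝ) :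
    ∑ i, f i * (dartIncidence G ⊗ₖ (1 : Matrix (Fin r) (Fin r) ℝ)).mulVec w i
     = ∑ j, (f (j.1.snd, j.2) - f (j.1.fst, j.2)) * w j := by
  have h := Matrix.dotProduct_mulVec f (dartIncidence G ⊗ₖ (1 : Matrix (Fin r) (Fin r) ℝ)) w
  rw [← Matrix.mulVec_transpose, ← Matrix.kroneckerMap_transpose, Matrix.transpose_one] at h
  simp only [dotProduct, BT_apply] at h
  exact h

lemma avg_apply {r : ℕ} (f : V × Fin r → ℝ) (i : V × Fin r) :
    ((Matrix.of fun _ _ : V => (1 : ℝ) / Fintype.card V)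
          ⊗ₖ (1 : Matrix (Fin r) (Fin r) ℝ)).mulVec f i = (∑ w, f (w, i.2)) / Fintype.card V := by
  simp [Matrix.mulVec, dotProduct, Fintype.sum_prod_type, Matrix.one_apply,
    kroneckerMap_apply, Finset.sum_div]
  exact Finset.sum_congr rfl fun _ _ => by ring
end graph

/-- asymptotic convergence of the robust dynamic average consensus algorithm
`ż = -γ z - (B ⊗ I_r) K(t) sgn((Bᵀ ⊗ I_r) x)`, `x = z + φ`, with adaptive gains
`κ̇ⱼ = |yⱼ|`, `κⱼ(t₀) ≥ 1`: for every initial condition the error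
`x̃(t) = x(t) - ((1/n) 1ₙ1ₙᵀ ⊗ I_r) φ(t)` tends to `0`.  (Norms on `ι → ℝ` are sup norms.) -/
theorem robust_dac_asymptotic_convergence
    {V : Type*} [Fintype V] [DecidableEq V] (G : SimpleGraph V) [DecidableRel G.Adj]
    (hG : G.Connected) (hn : 2 ≤ Fintype.card V)
    (r : ℕ) (hr : 1 ≤ r) (γ : ℝ) (hγ : 0 < γ) (t₀ : ℝ)
    (φ φ' : ℝ → V × Fin r → ℝ) (hφ : ∀ t : ℝ, HasDerivAt φ (φ' t) t)
    (φbar dφbar : ℝ)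
    (hφbar : ∀ t ≥ t₀,
      ‖((dartIncidence G)ᵀ ⊗ₖ (1 : Matrix (Fin r) (Fin r) ℝ)).mulVec (φ t)‖ ≤ φbar)
    (hdφbar : ∀ t ≥ t₀,
      ‖((dartIncidence G)ᵀ ⊗ₖ (1 : Matrix (Fin r) (Fin r) ℝ)).mulVec (φ' t)‖ ≤ dφbar)
    (z : ℝ → V × Fin r → ℝ) (κ : G.Dart × Fin r → ℝ → ℝ)
    (x : ℝ → V × Fin r → ℝ) (hx : ∀ t : ℝ, x t = z t + φ t)
    (y : ℝ → G.Dart × Fin r → ℝ)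
    (hy : ∀ t : ℝ, y t = ((dartIncidence G)ᵀ ⊗ₖ (1 : Matrix (Fin r) (Fin r) ℝ)).mulVec (x t))
    (hz : ∀ t ≥ t₀, HasDerivAt z
      (-γ • z t - (dartIncidence G ⊗ₖ (1 : Matrix (Fin r) (Fin r) ℝ)).mulVec
        ((Matrix.diagonal fun j => κ j t).mulVec fun j => Real.sign (y t j))) t)
    (hκ : ∀ j, ∀ t ≥ t₀, HasDerivAt (κ j) |y t j| t)
    (hκ0 : ∀ j, 1 ≤ κ j t₀) :
    Filter.Tendsto (fun t => x t -
        ((Matrix.of fun _ _ : V => (1 : ℝ) / Fintype.card V)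
          ⊗ₖ (1 : Matrix (Fin r) (Fin r) ℝ)).mulVec (φ t))
      Filter.atTop (nhds 0) := by
  have hc : (0 : ℝ) < Fintype.card V := by
    have : 0 < Fintype.card V := by omega
    exact_mod_cast this
  set B := dartIncidence G ⊗ₖ (1 : Matrix (Fin r) (Fin r) ℝ) with hB
  set w : ℝ → G.Dart × Fin r → ℝ := fun t =>
    (Matrix.diagonal fun j => κ j t).mulVec fun j => Real.sign (y t j) with hw
  have hwj : ∀ t j, w t j = κ j t * Real.sign (y t j) := by
    intro t j
    simp [hw, Matrix.mulVec_diagonal]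
  have hyj : ∀ t j, y t j = x t (j.1.snd, j.2) - x t (j.1.fst, j.2) := by
    intro t j
    rw [hy, BT_apply]
  have hzi : ∀ i, ∀ t ≥ t₀, HasDerivAt (fun t => z t i) (-γ * z t i - B.mulVec (w t) i) t := by
    intro i t ht
    exact (hasDerivAt_pi.1 (hz t ht) i).congr_deriv rfl
  -- the average of z
  have hs : ∀ k, Tendsto (fun t => ∑ v, z t (v, k)) atTop (𝓝 0) := by
    intro k
    refine exp_decay _ γ t₀ hγ fun t ht => ?_
    have h1 := HasDerivAt.fun_sum (u := Finset.univ) fun v _ => hzi (v, k) t ht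
    refine h1.congr_deriv ?_
    have h2 := dot_B G (fun i => if i.2 = k then (1 : ℝ) else 0) (w t)
    simp [Fintype.sum_prod_type] at h2
    rw [Finset.sum_sub_distrib, hB, h2, ← Finset.mul_sum, sub_zero]
  -- derivative of x
  set x' : ℝ → V × Fin r → ℝ := fun t i => -γ * x t i + (γ • φ t + φ' t) i - B.mulVec (w t) i
    with hx'
  have hxi : ∀ i, ∀ t ≥ t₀, HasDerivAt (fun t => x t i) (x' t i) t := by
    intro i t ht
    have h1 := (hzi i t ht).add (hasDerivAt_pi.1 (hφ t) i)
    have h2 : (fun t => x t i) = (fun t => z t i) + fun t => φ t i := by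
      funext t; simp [hx]
    rw [h2]
    refine h1.congr_deriv ?_
    simp [hx', hx]; ring
  have hei : ∀ i, ∀ t ≥ t₀, HasDerivAt (fun t => cen (x t) i) (cen (x' t) i) t := by
    intro i t ht
    exact (hxi i t ht).sub
      ((HasDerivAt.fun_sum (u := Finset.univ) fun v _ => hxi (v, i.2) t ht).div_const _)
  set U : ℝ → ℝ := fun t => (∑ i, cen (x t) i ^ 2) / 2 with hU
  have hUd : ∀ t ≥ t₀, HasDerivAt U (∑ i, cen (x t) i * x' t i) t := by
    intro t ht
    have h1 := (HasDerivAt.fun_sum (u := Finset.univ) fun i _ => (hei i t ht).pow 2).div_const 2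
    refine h1.congr_deriv ?_
    rw [← cen_dot, Finset.sum_div]
    refine Finset.sum_congr rfl fun i _ => ?_
    simp; ring
  set D : ℝ := Fintype.card V * ∑ j : G.Dart × Fin r, (γ * φbar + dφbar) with hD
  have hpsi : ∀ t ≥ t₀, ∀ i, |cen (γ • φ t + φ' t) i| ≤ D := by
    intro t ht i
    refine (cen_bound G hG _ i).trans (mul_le_mul_of_nonneg_left (Finset.sum_le_sum ?_) hc.le)
    intro j _
    have h1 := (norm_le_pi_norm _ j).trans (hφbar t ht)
    have h2 := (norm_le_pi_norm _ j).trans (hdφbar t ht)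
    rw [BT_apply, Real.norm_eq_abs] at h1 h2
    have h3 : (γ • φ t + φ' t) (j.1.snd, j.2) - (γ • φ t + φ' t) (j.1.fst, j.2)
      = γ * (φ t (j.1.snd, j.2) - φ t (j.1.fst, j.2))
        + (φ' t (j.1.snd, j.2) - φ' t (j.1.fst, j.2)) := by
      simp; ring
    rw [h3]
    refine (abs_add_le _ _).trans ?_
    rw [abs_mul, abs_of_pos hγ]
    exact add_le_add (mul_le_mul_of_nonneg_left h1 hγ.le) h2
  set C : ℝ := ∑ _i : V × Fin r, Fintype.card V * D with hC
  have hUt : Tendsto U atTop (𝓝 0) := by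
    refine core t₀ γ C hγ κ (fun j t => |y t j|) U _ (fun _ _ => abs_nonneg _) hκ
      (fun t => by simp only [hU]; positivity) hUd ?_
    intro t ht
    have e1 : ∑ i, cen (x t) i * x' t i
        = -γ * ∑ i, cen (x t) i * x t i + ∑ i, cen (x t) i * (γ • φ t + φ' t) i
          - ∑ i, cen (x t) i * B.mulVec (w t) i := by
      rw [Finset.mul_sum, ← Finset.sum_add_distrib, ← Finset.sum_sub_distrib]
      exact Finset.sum_congr rfl fun i _ => by simp only [hx']; ring
    have e2 : ∑ i, cen (x t) i * B.mulVec (w t) i = ∑ j, κ j t * |y t j| := by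
      rw [hB, dot_B]
      refine Finset.sum_congr rfl fun j _ => ?_
      have : cen (x t) (j.1.snd, j.2) - cen (x t) (j.1.fst, j.2) = y t j := by
        rw [hyj]; simp only [cen]; ring
      rw [this, hwj]
      rcases lt_trichotomy (y t j) 0 with h | h | h
      · rw [Real.sign_of_neg h, abs_of_neg h]; ring
      · simp [h]
      · rw [Real.sign_of_pos h, abs_of_pos h]; ring
    have e3 : ∑ i, cen (x t) i * (γ • φ t + φ' t) i ≤ C * ∑ j, |y t j| := by
      rw [← cen_dot, hC, Finset.sum_mul]
      refine Finset.sum_le_sum fun i _ => ?_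
      refine (le_abs_self _).trans ?_
      rw [abs_mul]
      have h1 := cen_bound G hG (x t) i
      simp only [← hyj] at h1
      have h2 := hpsi t ht i
      calc _ ≤ (Fintype.card V * ∑ j, |y t j|) * D :=
            mul_le_mul h1 h2 (abs_nonneg _) ((abs_nonneg _).trans h1)
        _ = _ := by ring
    have e4 : ∑ i, cen (x t) i * x t i = 2 * U t := by
      rw [← cen_dot, hU]
      simp only [← sq]; ring
    have e5 : ∑ j, (C - κ j t) * |y t j| = C * ∑ j, |y t j| - ∑ j, κ j t * |y t j| := by
      rw [Finset.mul_sum, ← Finset.sum_sub_distrib]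
      exact Finset.sum_congr rfl fun j _ => by ring
    rw [e1, e2, e4, e5]
    linarith
  rw [tendsto_pi_nhds]
  intro i
  have he : Tendsto (fun t => cen (x t) i) atTop (𝓝 0) := by
    have h1 : Tendsto (fun t => Real.sqrt (2 * U t)) atTop (𝓝 0) := by
      have := (hUt.const_mul 2).sqrt
      simpa using this
    refine squeeze_zero_norm (fun t => ?_) h1
    rw [Real.norm_eq_abs]
    apply Real.abs_le_sqrt
    have : cen (x t) i ^ 2 ≤ ∑ i, cen (x t) i ^ 2 :=
      Finset.single_le_sum (f := fun i => cen (x t) i ^ 2) (fun _ _ => sq_nonneg _)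
        (Finset.mem_univ i)
    simp only [hU]; linarith
  have hfin := he.add ((hs i.2).div_const (Fintype.card V : ℝ))
  simp only [zero_div, add_zero] at hfin
  refine hfin.congr fun t => ?_
  rw [Pi.sub_apply, avg_apply]
  simp only [cen, hx, Pi.add_apply, Finset.sum_add_distrib]
  ring
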